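/- Let V and B be finite types, E : V → B → V → Prop an edge-labeled directed multigraph, S F : V, N : ℕ, and x : B. If there is a walk from S to F with trace t such that x ∉ lruRun N [] t, then there is a walk from S to F with trace t' such that t'.length ≤ 2 * Fintype.card V * Fintype.card B and x ∉ lruRun N [] t'. (Hence the LRU exist-miss problem remains in NP even for cyclic control-flow graphs.) -/

import Mathlib

/-- One access to an LRU cache of associativity `N`. -/
def lruAccess {B : Type*} [DecidableEq B] (N : ℕ) (w : List B) (a : B) : List B :=
  if a ∈ w then w.erase a ++ [a]
  else if w.length < N then w ++ [a]
  else w.tail ++ [a]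

/-- Process a list of accesses in order, starting from state `w`. -/
def lruRun {B : Type*} [DecidableEq B] (N : ℕ) (w t : List B) : List B :=
  t.foldl (lruAccess N) w

/-- `Walk E u v t`: there is a walk from `u` to `v` in the edge-labeled directed
multigraph `E` whose list of edge labels, in order, is `t`. -/
inductive Walk {V B : Type*} (E : V → B → V → Prop) : V → V → List B → Prop
  | nil (v : V) : Walk E v v []
  | cons {u v w : V} {b : B} {t : List B} :
      E u b v → Walk E v w t → Walk E u w (b :: t)

theorem lruAccess_inv {B : Type*} [DecidableEq B] (N : ℕ) (w : List B) (a : B)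
    (hn : w.Nodup) (hl : w.length ≤ max N 1) :
    ∃ w0, lruAccess N w a = w0 ++ [a] ∧ (w0 ++ [a]).Nodup ∧ (w0 ++ [a]).length ≤ max N 1 := by
  unfold lruAccess
  split_ifs with h1 h2
  · refine ⟨_, rfl, ?_, ?_⟩
    · have h3 := hn.erase a
      have h4 : a ∉ w.erase a := hn.not_mem_erase
      rw [List.nodup_append]
      refine ⟨h3, by simp, ?_⟩
      intro b hb c hc
      simp at hc
      rintro rfl
      exact h4 (hc ▸ hb)
    · have := List.length_erase_of_mem h1
      have := List.length_pos_of_mem h1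
      simp only [List.length_append, List.length_singleton]; omega
  · refine ⟨_, rfl, ?_, ?_⟩
    · rw [List.nodup_append]
      refine ⟨hn, by simp, ?_⟩
      intro b hb c hc
      simp at hc
      rintro rfl
      exact h1 (hc ▸ hb)
    · simp only [List.length_append, List.length_singleton, List.length_tail]; omega
  · refine ⟨_, rfl, ?_, ?_⟩
    · rw [List.nodup_append]
      refine ⟨hn.tail, by simp, ?_⟩
      intro b hb c hc
      simp at hc
      rintro rfl
      exact h1 (hc ▸ List.mem_of_mem_tail hb)
    · simp only [List.length_append, List.length_singleton, List.length_tail]; omega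

theorem lruRun_inv {B : Type*} [DecidableEq B] (N : ℕ) (t w : List B)
    (hn : w.Nodup) (hl : w.length ≤ max N 1) :
    (lruRun N w t).Nodup ∧ (lruRun N w t).length ≤ max N 1 := by
  induction t generalizing w with
  | nil => exact ⟨hn, hl⟩
  | cons a t ih =>
    obtain ⟨w0, h1, h2, h3⟩ := lruAccess_inv N w a hn hl
    show (lruRun N (lruAccess N w a) t).Nodup ∧ (lruRun N (lruAccess N w a) t).length ≤ _
    rw [h1]
    exact ih _ h2 h3

theorem lruRun_notMem {B : Type*} [DecidableEq B] (N : ℕ) (x : B) (t w : List B)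
    (hw : x ∉ w) (ht : x ∉ t) : x ∉ lruRun N w t := by
  induction t generalizing w with
  | nil => exact hw
  | cons a t ih =>
    show x ∉ lruRun N (lruAccess N w a) t
    simp only [List.mem_cons, not_or] at ht
    refine ih _ ?_ ht.2
    unfold lruAccess
    split_ifs
    · simp only [List.mem_append, List.mem_singleton, not_or]
      exact ⟨fun h => hw (List.mem_of_mem_erase h), ht.1⟩
    · simp [hw, ht.1]
    · simp only [List.mem_append, List.mem_singleton, not_or]
      exact ⟨fun h => hw (List.mem_of_mem_tail h), ht.1⟩

theorem lruRun_mem_iff {B : Type*} [DecidableEq B] (N : ℕ) (x : B) (s w0 r : List B)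
    (hn : (w0 ++ x :: r).Nodup) (hl : (w0 ++ x :: r).length ≤ max N 1) (hs : x ∉ s) :
    x ∈ lruRun N (w0 ++ x :: r) s ↔ (r ++ s).toFinset.card < max N 1 := by
  induction s generalizing w0 r with
  | nil =>
    have : r.toFinset.card ≤ r.length := List.toFinset_card_le r
    simp only [lruRun, List.foldl_nil, List.append_nil]
    simp only [List.length_append, List.length_cons] at hl
    constructor
    · intro _; omega
    · intro _; simp
  | cons a s ih =>
    simp only [List.mem_cons, not_or] at hs
    obtain ⟨hxa, hs⟩ := hs
    obtain ⟨w1, e1, hn1, hl1⟩ := lruAccess_inv N _ a hn hl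
    rw [← e1] at hn1 hl1
    show x ∈ lruRun N (lruAccess N (w0 ++ x :: r) a) s ↔ _
    have key : ∀ w0' r' : List B, lruAccess N (w0 ++ x :: r) a = w0' ++ x :: r' →
        (∀ b, (b ∈ r' ↔ b ∈ r ∨ b = a)) →
        (x ∈ lruRun N (lruAccess N (w0 ++ x :: r) a) s ↔
          (r ++ a :: s).toFinset.card < max N 1) := by
      intro w0' r' e hr
      rw [e] at hn1 hl1 ⊢
      rw [ih w0' r' hn1 hl1 hs]
      have : (r' ++ s).toFinset = (r ++ a :: s).toFinset := by
        ext b; simp [hr]; tauto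
      rw [this]
    by_cases ha : a ∈ w0 ++ x :: r
    · by_cases h0 : a ∈ w0
      · apply key (w0.erase a) (r ++ [a])
        · unfold lruAccess
          rw [if_pos ha, List.erase_append_left _ h0]; simp
        · simp
      · have har : a ∈ r := by
          simp only [List.mem_append, List.mem_cons] at ha
          rcases ha with h | h | h
          · exact absurd h h0
          · exact absurd h.symm hxa
          · exact h
        have hnr : r.Nodup := by
          have := (List.nodup_append.1 hn).2.1
          exact (List.nodup_cons.1 this).2
        apply key w0 (r.erase a ++ [a])
        · unfold lruAccess
          rw [if_pos ha, List.erase_append_right _ h0, List.erase_cons_tail (by simpa using hxa)]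
          simp
        · intro b
          simp only [List.mem_append, List.mem_singleton, hnr.mem_erase_iff]
          by_cases hb : b = a <;> simp [hb]
    · by_cases hlt : (w0 ++ x :: r).length < N
      · apply key w0 (r ++ [a])
        · unfold lruAccess
          rw [if_neg ha, if_pos hlt]; simp
        · simp
      · cases w0 with
        | cons c w0 =>
          apply key w0 (r ++ [a])
          · unfold lruAccess
            rw [if_neg ha, if_neg hlt]; simp
          · simp
        | nil =>
          have e : lruAccess N ([] ++ x :: r) a = r ++ [a] := by
            unfold lruAccess
            rw [if_neg ha, if_neg hlt]; simp
          rw [e]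
          simp only [List.nil_append, List.nodup_cons, List.mem_cons, not_or, List.length_cons] at *
          have h1 : x ∉ lruRun N (r ++ [a]) s :=
            lruRun_notMem N x s _ (by simp [hn.1, hxa]) hs
          have h2 : (a :: r).toFinset.card = r.length + 1 := by
            rw [List.toFinset_card_of_nodup (List.nodup_cons.2 ⟨ha.2, hn.2⟩)]; simp
          have h3 : (a :: r).toFinset.card ≤ (r ++ a :: s).toFinset.card := by
            apply Finset.card_le_card
            intro b; simp; tauto
          constructor
          · intro h; exact absurd h h1
          · intro h; omega

theorem lruRun_last {B : Type*} [DecidableEq B] (N : ℕ) (x : B) (p s : List B) (hs : x ∉ s) :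
    x ∈ lruRun N [] (p ++ x :: s) ↔ s.toFinset.card < max N 1 := by
  obtain ⟨h1, h2⟩ := lruRun_inv N p [] (by simp) (by simp)
  obtain ⟨w0, e, h3, h4⟩ := lruAccess_inv N _ x h1 h2
  have : lruRun N [] (p ++ x :: s) = lruRun N (lruAccess N (lruRun N [] p) x) s := by
    simp [lruRun, List.foldl_append]
  rw [this, e, lruRun_mem_iff N x s w0 [] h3 h4 hs]; simp

/-- Walks with support list. -/
inductive WalkS {V B : Type*} (E : V → B → V → Prop) : V → V → List V → List B → Prop
  | nil (v : V) : WalkS E v v [v] []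
  | cons {u v w : V} {b : B} {l : List V} {t : List B} :
      E u b v → WalkS E v w l t → WalkS E u w (u :: l) (b :: t)

theorem WalkS.toWalk {V B : Type*} {E : V → B → V → Prop} {u v : V} {l : List V} {t : List B}
    (h : WalkS E u v l t) : Walk E u v t ∧ l.length = t.length + 1 := by
  induction h with
  | nil v => exact ⟨Walk.nil v, rfl⟩
  | cons e _ ih => exact ⟨Walk.cons e ih.1, by simp [ih.2]⟩

theorem WalkS.dropUntil {V B : Type*} {E : V → B → V → Prop} {u v : V} {l : List V} {t : List B}
    (h : WalkS E u v l t) (a : V) (ha : a ∈ l) :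
    ∃ l' t', WalkS E a v l' t' ∧ l'.Sublist l ∧ t'.Sublist t := by
  induction h with
  | nil v =>
    simp at ha; subst ha
    exact ⟨_, _, WalkS.nil a, List.Sublist.refl _, List.Sublist.refl _⟩
  | cons e h ih =>
    rcases List.mem_cons.1 ha with rfl | ha
    · exact ⟨_, _, WalkS.cons e h, List.Sublist.refl _, List.Sublist.refl _⟩
    · obtain ⟨l', t', h1, h2, h3⟩ := ih ha
      exact ⟨l', t', h1, h2.cons _, h3.cons _⟩

theorem Walk.bypass {V B : Type*} {E : V → B → V → Prop} {u v : V} {t : List B}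
    (h : Walk E u v t) : ∃ l t', WalkS E u v l t' ∧ l.Nodup ∧ t'.Sublist t := by
  induction h with
  | nil v => exact ⟨_, _, WalkS.nil v, by simp, List.Sublist.refl _⟩
  | @cons u v w b t e h ih =>
    obtain ⟨l, t', h1, h2, h3⟩ := ih
    by_cases hu : u ∈ l
    · obtain ⟨l', t'', h4, h5, h6⟩ := h1.dropUntil u hu
      exact ⟨l', t'', h4, h2.sublist h5, (h6.trans h3).cons _⟩
    · exact ⟨_, _, WalkS.cons e h1, List.nodup_cons.2 ⟨hu, h2⟩, h3.cons_cons _⟩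

theorem Walk.short {V B : Type*} [Fintype V] {E : V → B → V → Prop} {u v : V} {t : List B}
    (h : Walk E u v t) :
    ∃ t', Walk E u v t' ∧ t'.Sublist t ∧ t'.length + 1 ≤ Fintype.card V := by
  obtain ⟨l, t', h1, h2, h3⟩ := h.bypass
  exact ⟨t', h1.toWalk.1, h3, h1.toWalk.2 ▸ h2.length_le_card⟩

theorem Walk.append {V B : Type*} {E : V → B → V → Prop} {u v w : V} {p q : List B}
    (h : Walk E u v p) (h' : Walk E v w q) : Walk E u w (p ++ q) := by
  induction h with
  | nil v => exact h'
  | cons e _ ih => exact Walk.cons e (ih h')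

theorem Walk.split {V B : Type*} {E : V → B → V → Prop} {u w : V} (p : List B) {b : B} {q : List B}
    (h : Walk E u w (p ++ b :: q)) :
    ∃ v v', Walk E u v p ∧ E v b v' ∧ Walk E v' w q := by
  induction p generalizing u with
  | nil =>
    cases h with
    | cons e h => exact ⟨_, _, Walk.nil _, e, h⟩
  | cons a p ih =>
    cases h with
    | cons e h =>
      obtain ⟨v, v', h1, h2, h3⟩ := ih h
      exact ⟨v, v', Walk.cons e h1, h2, h3⟩

theorem first_hit {B : Type*} (P : B → Prop) (s : List B) (h : ∃ b ∈ s, P b) :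
    ∃ p b q, s = p ++ b :: q ∧ P b ∧ ∀ a ∈ p, ¬ P a := by
  induction s with
  | nil => simp at h
  | cons c s ih =>
    by_cases hc : P c
    · exact ⟨[], c, s, rfl, hc, by simp⟩
    · obtain ⟨p, b, q, e, hb, hp⟩ := ih (by
        obtain ⟨b, hb, hP⟩ := h
        rcases List.mem_cons.1 hb with rfl | hb
        · exact absurd hP hc
        · exact ⟨b, hb, hP⟩)
      refine ⟨c :: p, b, q, by simp [e], hb, ?_⟩
      intro a ha
      rcases List.mem_cons.1 ha with rfl | ha
      · exact hc
      · exact hp a ha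

theorem Walk.cover {V B : Type*} [Fintype V] [DecidableEq B] {E : V → B → V → Prop} (n : ℕ)
    (D : Finset B) (hD : D.card = n) {u v : V} {s : List B}
    (h : Walk E u v s) (hs : ∀ b ∈ D, b ∈ s) :
    ∃ s', Walk E u v s' ∧ s'.Sublist s ∧ (∀ b ∈ D, b ∈ s') ∧
      s'.length + 1 ≤ (n + 1) * Fintype.card V := by
  induction n generalizing D u s with
  | zero =>
    obtain ⟨t', h1, h2, h3⟩ := h.short
    rw [Finset.card_eq_zero] at hD
    subst hD
    exact ⟨t', h1, h2, by simp, by omega⟩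
  | succ n ih =>
    have hne : D.Nonempty := by rw [← Finset.card_pos]; omega
    obtain ⟨b0, hb0⟩ := hne
    obtain ⟨p, b, q, rfl, hb, hp⟩ := first_hit (· ∈ D) s ⟨b0, hs _ hb0, hb0⟩
    obtain ⟨m, m', h1, h2, h3⟩ := h.split p
    obtain ⟨p', g1, g2, g3⟩ := h1.short
    obtain ⟨q', k1, k2, k3, k4⟩ := ih (D.erase b) (by rw [Finset.card_erase_of_mem hb]; omega) h3 (by
      intro c hc
      rw [Finset.mem_erase] at hc
      have := hs c hc.2
      simp only [List.mem_append, List.mem_cons] at this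
      rcases this with h | h | h
      · exact absurd hc.2 (hp c h)
      · exact absurd h hc.1
      · exact h)
    refine ⟨p' ++ b :: q', g1.append (Walk.cons h2 k1), g2.append (k2.cons_cons b), ?_, ?_⟩
    · intro c hc
      by_cases hcb : c = b
      · simp [hcb]
      · simp [k3 c (Finset.mem_erase.2 ⟨hcb, hc⟩)]
    · simp only [List.length_append, List.length_cons]
      have : (n + 1 + 1) * Fintype.card V = (n + 1) * Fintype.card V + Fintype.card V := by ring
      omega

/-- if some walk from `S` to `F` leaves `x` out of the LRU cache
(starting from the empty cache), then some walk of length at most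
`2 * Fintype.card V * Fintype.card B` does, so LRU exist-miss is in NP even
for cyclic control-flow graphs. -/
theorem lru_exist_miss_short_witness {V B : Type*} [Fintype V] [Fintype B] [DecidableEq B]
    (E : V → B → V → Prop) (S F : V) (N : ℕ) (x : B) (t : List B)
    (hwalk : Walk E S F t) (hx : x ∉ lruRun N ([] : List B) t) :
    ∃ t' : List B, Walk E S F t' ∧
      t'.length ≤ 2 * Fintype.card V * Fintype.card B ∧
      x ∉ lruRun N ([] : List B) t' := by
  have hB : 1 ≤ Fintype.card B := Fintype.card_pos_iff.2 ⟨x⟩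
  by_cases hxt : x ∈ t
  · obtain ⟨s0, p0, q0, hx1⟩ : ∃ p s, t = p ++ x :: s ∧ x ∉ s := by
      obtain ⟨p, b, q, e, hb, hp⟩ := first_hit (· = x) t.reverse ⟨x, by simpa using hxt, rfl⟩
      subst hb
      refine ⟨q.reverse, p.reverse, ?_, ?_⟩
      · rw [← List.reverse_reverse t, e]; simp
      · intro h
        exact hp b (by simpa using h) rfl
    subst q0
    rw [lruRun_last N x s0 p0 hx1] at hx
    obtain ⟨m, m', h1, h2, h3⟩ := hwalk.split s0
    obtain ⟨p', g1, g2, g3⟩ := h1.short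
    obtain ⟨q', k1, k2, k3, k4⟩ := h3.cover _ p0.toFinset rfl (by simp)
    have hc : p0.toFinset.card + 1 ≤ Fintype.card B := by
      have : p0.toFinset.card < Fintype.card B :=
        Finset.card_lt_univ_of_notMem (x := x) (by simpa using hx1)
      omega
    refine ⟨p' ++ x :: q', g1.append (Walk.cons h2 k1), ?_, ?_⟩
    · simp only [List.length_append, List.length_cons]
      have a1 := Nat.mul_le_mul_right (Fintype.card V) hc
      have a2 := Nat.mul_le_mul_right (Fintype.card V) hB
      have a3 : 2 * Fintype.card V * Fintype.card B
        = Fintype.card B * Fintype.card V + Fintype.card B * Fintype.card V := by ring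
      omega
    · rw [lruRun_last N x p' q' (fun h => hx1 (k2.subset h))]
      have : p0.toFinset.card ≤ q'.toFinset.card := by
        apply Finset.card_le_card
        intro b hb
        simpa using k3 b hb
      omega
  · obtain ⟨t', h1, h2, h3⟩ := hwalk.short
    refine ⟨t', h1, ?_, lruRun_notMem N x t' [] (by simp) (fun h => hxt (h2.subset h))⟩
    have a2 := Nat.mul_le_mul_left (Fintype.card V) hB
    have a3 : 2 * Fintype.card V * Fintype.card B
        = Fintype.card V * Fintype.card B + Fintype.card V * Fintype.card B := by ring
    omega
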